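/- Let Γ be a finite group, s : Z/2Z → Γ a homomorphism, and (G,c,π) a class triple for s. Then the number of automorphisms of the triple satisfies |Aut(G,c,π)| = |(ker π)^{im s}| · |Aut_Γ(ker π)|, where (ker π)^{im s} is the subgroup of elements of ker π fixed by conjugation by every element of the image of c (equivalently, by the conjugation action of im s), and Aut_Γ(ker π) is the group of automorphisms ψ of ker π satisfying ψ(g n g⁻¹) = g ψ(n) g⁻¹ for all g ∈ G and n ∈ ker π. -/

import Mathlib

/-- `(G, c, π)` is a class triple for `s : ZMod 2 → Γ`:  `π` is surjective with abelian
kernel of order coprime to `|Γ|`, `π ∘ c = s`, the conjugation action of `Γ` (via preimages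
in `G`; equivalently of all of `G` since `π` is surjective) on `ker π` has trivial fixed
subgroup, and `im c ∩ ker π = 1`. -/
structure IsClassTriple {Γ G : Type*} [Group Γ] [Finite Γ] [Group G] [Finite G]
    (s : Multiplicative (ZMod 2) →* Γ) (π : G →* Γ)
    (c : Multiplicative (ZMod 2) →* G) : Prop where
  surjective : Function.Surjective π
  ker_comm : ∀ a b : π.ker, a * b = b * a
  coprime : Nat.Coprime (Nat.card π.ker) (Nat.card Γ)
  compat : π.comp c = s
  fixed_trivial : ∀ n : π.ker, (∀ g : G, g * (n : G) * g⁻¹ = (n : G)) → n = 1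
  range_inf_ker : c.range ⊓ π.ker = ⊥

/-!
Write `N = ker π`. Restriction to `N` is a homomorphism from `Aut(G, c, π)` to `Aut_Γ(N)`.
It is onto: by Schur–Zassenhaus and the vanishing of `H¹` in coprime orders, `im c` lies in a
complement `K` of `N`, and `nk ↦ ψ(n)k` extends an equivariant `ψ`. By the same vanishing, its
kernel consists of the conjugations by elements of `N` fixed by `im c`, and two such elements give
the same conjugation exactly when they differ by an element of `N^Γ`. Hence
`|Aut(G, c, π)| · |N^Γ| = |N^{im c}| · |Aut_Γ(N)|`, for an arbitrary group in place of `ℤ/2ℤ`.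
-/

section Conjugation

variable {G : Type*} [Group G]

theorem conj_eq_self_comm {a b : G} : a * b * a⁻¹ = b ↔ b * a * b⁻¹ = a := by
  rw [mul_inv_eq_iff_eq_mul, mul_inv_eq_iff_eq_mul, eq_comm]

variable {N : Subgroup G} [IsMulCommutative N]

theorem conj_eq_self_of_mem {m n : G} (hm : m ∈ N) (hn : n ∈ N) : m * n * m⁻¹ = n :=
  mul_inv_eq_iff_eq_mul.mpr (congrArg Subtype.val (mul_comm' (⟨m, hm⟩ : N) ⟨n, hn⟩))

theorem conj_eq_conj_of_inv_mul_mem {g g' n : G} (hg : g⁻¹ * g' ∈ N) (hn : n ∈ N) :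
    g' * n * g'⁻¹ = g * n * g⁻¹ :=
  calc g' * n * g'⁻¹ = g * (g⁻¹ * g' * n * (g⁻¹ * g')⁻¹) * g⁻¹ := by group
    _ = g * n * g⁻¹ := by rw [conj_eq_self_of_mem hg hn]

end Conjugation

section CoprimeConjugacy

open groupCohomology

theorem isMulCoboundary₁_of_coprime {H M : Type*} [Group H] [Finite H] [CommGroup M]
    [MulDistribMulAction H M] (hcop : (Nat.card M).Coprime (Nat.card H)) {f : H → M}
    (hf : IsMulCocycle₁ f) : IsMulCoboundary₁ f := by
  have := Fintype.ofFinite H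
  have prod_eq (x : H) : ∏ y, f y = x • (∏ y, f y) * f x ^ Nat.card H :=
    calc ∏ y, f y = ∏ y, f (x * y) := (Equiv.prod_comp (Equiv.mulLeft x) f).symm
      _ = ∏ y, x • f y * f x := Finset.prod_congr rfl fun y _ => hf x y
      _ = x • (∏ y, f y) * f x ^ Nat.card H := by
        rw [Finset.prod_mul_distrib, Finset.prod_const, Finset.smul_prod', Finset.card_univ,
          Nat.card_eq_fintype_card]
  obtain ⟨m, hm⟩ : ∃ m : M, m ^ Nat.card H = (∏ y, f y)⁻¹ := (powCoprime hcop).surjective _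
  refine ⟨m, fun x => (powCoprime hcop).injective ?_⟩
  change (x • m / m) ^ Nat.card H = f x ^ Nat.card H
  rw [div_pow, ← smul_pow', hm, smul_inv', div_inv_eq_mul, inv_mul_eq_iff_eq_mul]
  exact prod_eq x

variable {G : Type*} [Group G] {N : Subgroup G} [N.Normal]

theorem card_dvd_index_of_disjoint {C : Subgroup G} (hC : Disjoint N C) :
    Nat.card C ∣ N.index := by
  rw [← Subgroup.relIndex_bot_left, ← hC.eq_bot, Subgroup.inf_relIndex_right]
  exact Subgroup.relIndex_dvd_index_of_normal N C

variable [IsMulCommutative N]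

theorem exists_eq_conj_of_coprime {H : Type*} [Group H] [Finite H]
    (hcop : (Nat.card N).Coprime (Nat.card H)) (σ σ' : H →* G)
    (hσ : ∀ x, σ' x * (σ x)⁻¹ ∈ N) : ∃ n ∈ N, ∀ x, σ' x = n * σ x * n⁻¹ := by
  let _ : CommGroup N := { mul_comm := mul_comm' }
  let _ : MulDistribMulAction H N :=
    MulDistribMulAction.compHom N ((MulAut.conjNormal (H := N)).comp σ)
  have coe_smul (x : H) (n : N) : ((x • n : N) : G) = σ x * n * (σ x)⁻¹ :=
    MulAut.conjNormal_apply (σ x) n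
  let f : H → N := fun x => ⟨σ' x * (σ x)⁻¹, hσ x⟩
  have hf : IsMulCocycle₁ f := fun x y => by
    rw [mul_comm]
    ext
    simp only [f, Subgroup.coe_mul, coe_smul, map_mul]
    group
  obtain ⟨m, hm⟩ := isMulCoboundary₁_of_coprime hcop hf
  refine ⟨m⁻¹, inv_mem m.2, fun x => ?_⟩
  have hmx : (m : G)⁻¹ * (σ x * m * (σ x)⁻¹) = σ' x * (σ x)⁻¹ := by
    rw [← coe_smul, ← Subgroup.coe_inv, ← Subgroup.coe_mul, mul_comm, ← div_eq_mul_inv, hm]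
  rw [eq_mul_inv_iff_mul_eq.mpr hmx.symm]
  group

theorem exists_le_isComplement'_of_coprime [Finite G] (hcop : (Nat.card N).Coprime N.index)
    {C : Subgroup G} (hC : Disjoint N C) : ∃ K, C ≤ K ∧ N.IsComplement' K := by
  obtain ⟨K, hK⟩ := Subgroup.exists_right_complement'_of_coprime hcop
  let projK : G →* K := hK.symm.QuotientMulEquiv.toMonoidHom.comp (QuotientGroup.mk' N)
  have mk_projK (g : G) : (projK g : G ⧸ N) = g :=
    hK.symm.QuotientMulEquiv.symm_apply_apply (g : G ⧸ N)
  obtain ⟨n, -, hn⟩ := exists_eq_conj_of_coprime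
    (hcop.coprime_dvd_right (card_dvd_index_of_disjoint hC))
    ((K.subtype.comp projK).comp C.subtype) C.subtype
    fun x => by
      rw [← QuotientGroup.eq_one_iff, QuotientGroup.mk_mul, QuotientGroup.mk_inv]
      exact mul_inv_eq_one.mpr (mk_projK x).symm
  let K' := K.map (MulAut.conj n).toMonoidHom
  have card_K' : Nat.card K' = N.index := by
    rw [hK.symm.index_eq_card]
    exact Subgroup.card_map_of_injective (MulAut.conj n).injective
  refine ⟨K', fun x hx => ⟨projK x, (projK x).2, (hn ⟨x, hx⟩).symm⟩, ?_⟩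
  apply Subgroup.isComplement'_of_coprime
  · rw [card_K', N.card_mul_index]
  · rwa [card_K']

end CoprimeConjugacy

section Complement

variable {G : Type*} [Group G] {N K : Subgroup G}

theorem hom_ext_of_sup_eq_top {M : Type*} [Monoid M] (hNK : N ⊔ K = ⊤) {f g : G →* M}
    (hN : ∀ n ∈ N, f n = g n) (hK : ∀ k ∈ K, f k = g k) : f = g :=
  MonoidHom.eq_of_eqOn_top (hNK ▸ sup_le (a := N) (c := f.eqLocus g) hN hK)

theorem exists_mulAut_extending [N.Normal] (hK : N.IsComplement' K) {ψ : MulAut N}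
    (hψ : ∀ (k : K) (n : N),
      ψ (MulAut.conjNormal (k : G) n) = MulAut.conjNormal (k : G) (ψ n)) :
    ∃ τ : MulAut G, (∀ n : N, τ n = ψ n) ∧ ∀ k ∈ K, τ k = k := by
  let e := SemidirectProduct.mulEquivSubgroup hK
  have e_inl (n : N) : e (.inl n) = n := mul_one (n : G)
  have e_inr (k : K) : e (.inr k) = k := one_mul (k : G)
  let τ : MulAut G := (e.symm.trans (SemidirectProduct.congr ψ (MulEquiv.refl K)
    (by exact fun k => MulEquiv.ext (hψ k)))).trans e
  have τ_e (x) : τ (e x) = e ⟨ψ x.left, x.right⟩ := by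
    simp only [τ, MulAut, MulEquiv.trans_apply, e.symm_apply_apply]
    rfl
  refine ⟨τ, fun n => ?_, fun k hk => ?_⟩
  · rw [← e_inl n, τ_e, ← e_inl]
    rfl
  · lift k to K using hk
    rw [← e_inr k, τ_e, SemidirectProduct.left_inr, map_one]
    rfl

end Complement

section Restriction

variable {Γ G D : Type*} [Group Γ] [Group G] [Group D]

/-- The group `Aut(G, c, π)`, for `c` defined on an arbitrary group. -/
def tripleAut (π : G →* Γ) (c : D →* G) : Subgroup (MulAut G) where
  carrier := {τ | (∀ g, π (τ g) = π g) ∧ ∀ x, τ (c x) = c x}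
  one_mem' := ⟨fun _ => rfl, fun _ => rfl⟩
  mul_mem' := fun ha hb =>
    ⟨fun g => (ha.1 _).trans (hb.1 g), fun x => (congrArg _ (hb.2 x)).trans (ha.2 x)⟩
  inv_mem' := fun {τ} hτ =>
    ⟨fun g => by rw [← hτ.1, MulAut.apply_inv_self],
      fun x => by rw [MulAut.inv_apply, MulEquiv.symm_apply_eq, hτ.2]⟩

/-- The elements of `N` fixed under conjugation by the image of `c`; for `c = id` these are the
elements of `N` that are central in `G`. -/
def conjFixed (N : Subgroup G) (c : D →* G) : Subgroup N where
  carrier := {n | ∀ x, c x * (n : G) * (c x)⁻¹ = n}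
  one_mem' := by simp
  mul_mem' := fun {a b} ha hb x => by rw [Subgroup.coe_mul, ← conj_mul, ha, hb]
  inv_mem' := fun {a} ha x => by rw [Subgroup.coe_inv, ← conj_inv, ha]

/-- The automorphisms of the normal subgroup `N` that commute with conjugation by `G`. -/
def equivariantAut (N : Subgroup G) [hN : N.Normal] : Subgroup (MulAut N) where
  carrier := {ψ | ∀ (g : G) (n : N),
    (ψ ⟨g * (n : G) * g⁻¹, hN.conj_mem _ n.2 g⟩ : G) = g * (ψ n : G) * g⁻¹}
  one_mem' := fun _ _ => rfl
  mul_mem' := fun {ψ φ} hψ hφ g n =>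
    (congrArg (fun m => (ψ m : G)) (Subtype.ext (hφ g n))).trans (hψ g (φ n))
  inv_mem' := fun {ψ} hψ g n => by
    have hψinv : ψ (MulAut.conjNormal g (ψ⁻¹ n)) = MulAut.conjNormal g n :=
      Subtype.ext <| (hψ g (ψ⁻¹ n)).trans (by rw [MulAut.apply_inv_self, MulAut.conjNormal_apply])
    exact congrArg Subtype.val (ψ.symm_apply_eq.mpr hψinv.symm)

/-- Conjugation by elements of `N`, as automorphisms of the whole group. -/
def conjHom (N : Subgroup G) : N →* MulAut G := MulAut.conj.comp N.subtype

theorem ker_conjHom (N : Subgroup G) : (conjHom N).ker = conjFixed N (MonoidHom.id G) := by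
  ext n
  exact MulEquiv.ext_iff.trans (forall_congr' fun _ => conj_eq_self_comm)

theorem ker_conjHom_le_conjFixed (N : Subgroup G) (c : D →* G) :
    (conjHom N).ker ≤ conjFixed N c :=
  ker_conjHom N ▸ fun _ hn x => hn (c x)

theorem card_map_conjHom_mul (N : Subgroup G) (c : D →* G) :
    Nat.card ((conjFixed N c).map (conjHom N)) * Nat.card (conjFixed N (MonoidHom.id G)) =
      Nat.card (conjFixed N c) := by
  rw [← Subgroup.relIndex_ker, ← ker_conjHom, mul_comm, ← Subgroup.relIndex_bot_left,
    Subgroup.relIndex_mul_relIndex _ _ _ bot_le (ker_conjHom_le_conjFixed N c),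
    Subgroup.relIndex_bot_left]

variable {π : G →* Γ} {c : D →* G}

theorem apply_mem_ker_of_mem_tripleAut {τ : MulAut G} (hτ : τ ∈ tripleAut π c) {n : G}
    (hn : n ∈ π.ker) : τ n ∈ π.ker :=
  (hτ.1 n).trans hn

theorem map_conjHom_le_tripleAut : (conjFixed π.ker c).map (conjHom π.ker) ≤ tripleAut π c := by
  rintro _ ⟨n, hn, rfl⟩
  refine ⟨fun g => ?_, fun x => ?_⟩
  · change π (n * g * (n : G)⁻¹) = π g
    rw [map_mul, map_mul, map_inv, MonoidHom.mem_ker.mp n.2, one_mul, inv_one, mul_one]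
  · exact conj_eq_self_comm.mp (hn x)

variable (π c) in
/-- Restriction of the automorphisms of `(G, c, π)` to the kernel of `π`. -/
def restrictKer : tripleAut π c →* MulAut π.ker where
  toFun τ :=
    { toFun n := ⟨τ.1 n, apply_mem_ker_of_mem_tripleAut τ.2 n.2⟩
      invFun n := ⟨τ.1⁻¹ n, apply_mem_ker_of_mem_tripleAut (inv_mem τ.2) n.2⟩
      left_inv n := Subtype.ext (τ.1.symm_apply_apply n)
      right_inv n := Subtype.ext (τ.1.apply_symm_apply n)
      map_mul' m n := Subtype.ext (map_mul τ.1 (m : G) n) }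
  map_one' := rfl
  map_mul' _ _ := rfl

variable [IsMulCommutative π.ker]

theorem restrictKer_mem_equivariantAut (τ : tripleAut π c) :
    restrictKer π c τ ∈ equivariantAut π.ker := fun g n => by
  have hτg : g⁻¹ * τ.1 g ∈ π.ker := by
    rw [MonoidHom.mem_ker, map_mul, map_inv, τ.2.1, inv_mul_cancel]
  change τ.1 (g * n * g⁻¹) = g * τ.1 n * g⁻¹
  rw [map_mul, map_mul, map_inv]
  exact conj_eq_conj_of_inv_mul_mem hτg (apply_mem_ker_of_mem_tripleAut τ.2 n.2)

variable [Finite G]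

theorem range_restrictKer (hcop : (Nat.card π.ker).Coprime π.ker.index)
    (hc : Disjoint π.ker c.range) : (restrictKer π c).range = equivariantAut π.ker := by
  refine le_antisymm (by rintro _ ⟨τ, rfl⟩; exact restrictKer_mem_equivariantAut τ) fun ψ hψ => ?_
  obtain ⟨K, hcK, hK⟩ := exists_le_isComplement'_of_coprime hcop hc
  obtain ⟨τ, hτN, hτK⟩ := exists_mulAut_extending hK fun k n => Subtype.ext (hψ k n)
  have hτπ : π.comp τ.toMonoidHom = π := hom_ext_of_sup_eq_top hK.sup_eq_top
    (fun n hn => by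
      change π (τ n) = π n
      rw [hτN ⟨n, hn⟩, MonoidHom.mem_ker.mp (ψ _).2, MonoidHom.mem_ker.mp hn])
    (fun k hk => congrArg π (hτK k hk))
  exact ⟨⟨τ, DFunLike.congr_fun hτπ, fun x => hτK _ (hcK ⟨x, rfl⟩)⟩,
    MulEquiv.ext fun n => Subtype.ext (hτN n)⟩

theorem exists_eq_conj_of_restrictKer_eq_one (hcop : (Nat.card π.ker).Coprime π.ker.index)
    {τ : tripleAut π c} (hτ : restrictKer π c τ = 1) :
    ∃ n ∈ conjFixed π.ker c, conjHom π.ker n = τ := by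
  obtain ⟨K, hK⟩ := Subgroup.exists_right_complement'_of_coprime hcop
  obtain ⟨n, hn, hτK⟩ := exists_eq_conj_of_coprime (hK.symm.index_eq_card ▸ hcop)
    K.subtype (τ.1.toMonoidHom.comp K.subtype) fun k => by
      change π (τ.1 k * (k : G)⁻¹) = 1
      rw [map_mul, map_inv, τ.2.1, mul_inv_cancel]
  have hτN (m : G) (hm : m ∈ π.ker) : τ.1 m = m :=
    congrArg Subtype.val (DFunLike.congr_fun hτ (⟨m, hm⟩ : π.ker))
  have hconj : (MulAut.conj n).toMonoidHom = τ.1.toMonoidHom := hom_ext_of_sup_eq_top hK.sup_eq_top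
    (fun m hm => (conj_eq_self_of_mem hn hm).trans (hτN m hm).symm)
    (fun k hk => (hτK ⟨k, hk⟩).symm)
  refine ⟨⟨n, hn⟩, fun x => ?_, MulEquiv.toMonoidHom_injective hconj⟩
  have hcx : n * c x * n⁻¹ = c x := (DFunLike.congr_fun hconj (c x)).trans (τ.2.2 x)
  exact conj_eq_self_comm.mp hcx

theorem ker_restrictKer (hcop : (Nat.card π.ker).Coprime π.ker.index) :
    (restrictKer π c).ker =
      ((conjFixed π.ker c).map (conjHom π.ker)).subgroupOf (tripleAut π c) := by
  ext τ
  refine ⟨exists_eq_conj_of_restrictKer_eq_one hcop, ?_⟩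
  rintro ⟨n, -, hn⟩
  exact MulEquiv.ext fun m => Subtype.ext <|
    calc τ.1 m = n * m * (n : G)⁻¹ := (DFunLike.congr_fun hn (m : G)).symm
      _ = m := conj_eq_self_of_mem n.2 m.2

end Restriction

section ClassTriple

variable {Γ G : Type*} [Group Γ] [Finite Γ] [Group G] [Finite G]
  {s : Multiplicative (ZMod 2) →* Γ} {π : G →* Γ} {c : Multiplicative (ZMod 2) →* G}

theorem IsClassTriple.coprime_index (h : IsClassTriple s π c) :
    (Nat.card π.ker).Coprime π.ker.index :=
  h.coprime.coprime_dvd_right (Subgroup.index_ker π ▸ π.range.card_subgroup_dvd_card)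

theorem IsClassTriple.conjFixed_id_eq_bot (h : IsClassTriple s π c) :
    conjFixed π.ker (MonoidHom.id G) = ⊥ :=
  (Subgroup.eq_bot_iff_forall _).mpr h.fixed_trivial

end ClassTriple

theorem card_aut_classTriple_general {Γ G D : Type*} [Group Γ] [Group G] [Finite G] [Group D]
    (π : G →* Γ) (c : D →* G) [IsMulCommutative π.ker]
    (hcop : (Nat.card π.ker).Coprime π.ker.index) (hc : Disjoint π.ker c.range) :
    Nat.card (tripleAut π c) * Nat.card (conjFixed π.ker (MonoidHom.id G)) =
      Nat.card (conjFixed π.ker c) * Nat.card (equivariantAut π.ker) := by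
  have card_ker : Nat.card (restrictKer π c).ker =
      Nat.card ((conjFixed π.ker c).map (conjHom π.ker)) := by
    rw [ker_restrictKer hcop]
    exact Nat.card_congr (Subgroup.subgroupOfEquivOfLe map_conjHom_le_tripleAut).toEquiv
  rw [← (restrictKer π c).ker.card_mul_index, Subgroup.index_ker, range_restrictKer hcop hc,
    card_ker, ← card_map_conjHom_mul π.ker c, mul_right_comm]

theorem card_aut_classTriple {Γ G : Type} [Group Γ] [Finite Γ] [Group G] [Finite G]
    (s : Multiplicative (ZMod 2) →* Γ) (π : G →* Γ) (c : Multiplicative (ZMod 2) →* G)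
    (h : IsClassTriple s π c) :
    Nat.card {τ : G ≃* G // (∀ g, π (τ g) = π g) ∧ ∀ x, τ (c x) = c x} =
      Nat.card {n : π.ker // ∀ x : Multiplicative (ZMod 2),
          c x * (n : G) * (c x)⁻¹ = (n : G)} *
      Nat.card {ψ : π.ker ≃* π.ker // ∀ (g : G) (n : π.ker),
          ((ψ ⟨g * (n : G) * g⁻¹, π.normal_ker.conj_mem _ n.2 g⟩ : π.ker) : G)
            = g * ((ψ n : π.ker) : G) * g⁻¹} := by
  have : IsMulCommutative π.ker := .of_comm h.ker_comm
  have hcard := card_aut_classTriple_general π c h.coprime_index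
    (disjoint_iff.mpr h.range_inf_ker).symm
  rwa [h.conjFixed_id_eq_bot, Subgroup.card_bot, mul_one] at hcard
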